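/- arXiv:1310.3326 — 6 statements merged into one kernel-verified Lean document; each statement's English description precedes it below -/
import Mathlib

section
/- Define ℍ^𝒜₊ := {ξ ∈ ℍ^𝒜 : σξ = ξ} and ℍ^𝒜₋ := {ξ ∈ ℍ^𝒜 : σξ = −ξ}. An element ξ ∈ ℍ^𝒜 is invertible in ℍ^𝒜 if and only if ξ ∉ ℍ^𝒜₊ ∪ ℍ^𝒜₋. -/
/-!
The algebra of Lorentz numbers `𝒜 = {x + σy}` with `σ² = 1` is identified with the
product ring `ℝ × ℝ` via `x + σy ↦ (x + y, x − y)`, under which `σ ↦ (1, −1)`.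
`ℍ^𝒜` is the quaternion algebra over this commutative ring.
-/

noncomputable section

/-- The algebra of Lorentz numbers `𝒜`, identified with the product ring `ℝ × ℝ`. -/
abbrev LorentzA : Type := ℝ × ℝ

/-- `ℍ^𝒜`, the quaternions with coefficients in the Lorentz numbers `𝒜`. -/
abbrev HA : Type := Quaternion LorentzA

/-- The Lorentz number `σ`, corresponding to `(1, -1)` in `ℝ × ℝ`. -/
def σA : LorentzA := (1, -1)

/-- `σ` viewed as an element of `ℍ^𝒜`. -/
def σQ : HA := ((σA : LorentzA) : HA)

/-- The embedding of `ℝ` in `𝒜` (the diagonal of `ℝ × ℝ`). -/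
def toA (x : ℝ) : LorentzA := (x, x)

/-- The `𝒜`-valued pairing `H` on `ℍ^𝒜`: `H(ξ, ξ') = a₀a₀' + a₁a₁' + a₂a₂' + a₃a₃'`. -/
def Hform (ξ ξ' : HA) : LorentzA :=
  ξ.re * ξ'.re + ξ.imI * ξ'.imI + ξ.imJ * ξ'.imJ + ξ.imK * ξ'.imK

/-- The conjugation `x + σy ↦ x − σy` of `𝒜`, i.e. the swap of the factors of `ℝ × ℝ`. -/
def swapA (a : LorentzA) : LorentzA := (a.2, a.1)

/-- The hat operation on `ℍ^𝒜`, applying the conjugation of `𝒜` to each coefficient. -/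
def hatQ (ξ : HA) : HA := ⟨swapA ξ.re, swapA ξ.imI, swapA ξ.imJ, swapA ξ.imK⟩

/-- The imaginary unit `I` of `ℍ^𝒜`. -/
def Iq : HA := ⟨0, 1, 0, 0⟩
/-- The imaginary unit `J` of `ℍ^𝒜`. -/
def Jq : HA := ⟨0, 0, 1, 0⟩
/-- The imaginary unit `K` of `ℍ^𝒜`. -/
def Kq : HA := ⟨0, 0, 0, 1⟩

/-- The embedding of Euclidean `ℝ⁴` into `ℍ^𝒜`: `(x₀,x₁,x₂,x₃) ↦ σx₀·1 + x₁I + x₂J + x₃K`. -/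
def embR4 (x₀ x₁ x₂ x₃ : ℝ) : HA := ⟨(x₀, -x₀), toA x₁, toA x₂, toA x₃⟩

/-- `ℝ⁴` as a subset of `ℍ^𝒜`: `{ξ : hat(conj ξ) = -ξ}`. -/
def R4set : Set HA := {ξ | hatQ (star ξ) = -ξ}

/-- The embedding `ι : ℍ → ℍ^𝒜` induced by the diagonal inclusion `ℝ → ℝ × ℝ ≅ 𝒜`. -/
def iotaH (q : Quaternion ℝ) : HA := ⟨toA q.re, toA q.imI, toA q.imJ, toA q.imK⟩

/-- Componentwise cosine on `𝒜 ≅ ℝ × ℝ`. -/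
def cosA (a : LorentzA) : LorentzA := (Real.cos a.1, Real.cos a.2)
/-- Componentwise sine on `𝒜 ≅ ℝ × ℝ`. -/
def sinA (a : LorentzA) : LorentzA := (Real.sin a.1, Real.sin a.2)

/-- The Lorentz number `θ₁ + σθ₂`, i.e. `(θ₁ + θ₂, θ₁ − θ₂)` in `ℝ × ℝ`. -/
def mkA (θ₁ θ₂ : ℝ) : LorentzA := (θ₁ + θ₂, θ₁ - θ₂)

/-- The cross product of two imaginary elements of `ℍ^𝒜`: `ξ × ξ' = (ξξ' − ξ'ξ)/2`. -/
def crossP (ξ ξ' : HA) : HA := (1/2 : ℝ) • (ξ * ξ' - ξ' * ξ)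

/-- `(1+σ)/2` in `ℍ^𝒜`. -/
def halfPlus : HA := (1/2 : ℝ) • ((1 : HA) + σQ)
/-- `(1−σ)/2` in `ℍ^𝒜`. -/
def halfMinus : HA := (1/2 : ℝ) • ((1 : HA) - σQ)

/-!
As `𝒜 ≅ ℝ × ℝ`, a quaternion over `𝒜` is a pair `(ξ₊, ξ₋)` of real quaternions, multiplied
componentwise. Hamilton's quaternions form a division ring, so the pair is invertible exactly when
`ξ₊ ≠ 0` and `ξ₋ ≠ 0`. As `σ` is the pair `(1, -1)`, the equation `σξ = ξ` says `ξ₋ = 0` and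
`σξ = -ξ` says `ξ₊ = 0`.
-/

open scoped Quaternion

section CommRing

variable {R S : Type*} [CommRing R] [CommRing S]

/-- The ring homomorphism `ℍ[R] →+* ℍ[S]` applying `f : R →+* S` to each coefficient, used to
project the quaternions over a product ring onto the quaternions over its factors. -/
def quaternionMap (f : R →+* S) : ℍ[R] →+* ℍ[S] where
  toFun q := ⟨f q.re, f q.imI, f q.imJ, f q.imK⟩
  map_zero' := by apply Quaternion.ext <;> exact map_zero f
  map_one' := by
    apply Quaternion.ext
    · exact map_one f
    all_goals exact map_zero f
  map_add' p q := by apply Quaternion.ext <;> exact map_add f _ _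
  map_mul' p q := by
    apply Quaternion.ext
    · exact Eq.trans (by simp) (Quaternion.re_mul _ _).symm
    · exact Eq.trans (by simp) (Quaternion.imI_mul _ _).symm
    · exact Eq.trans (by simp) (Quaternion.imJ_mul _ _).symm
    · exact Eq.trans (by simp) (Quaternion.imK_mul _ _).symm

/-- The isomorphism `ℍ[R × S] ≃+* ℍ[R] × ℍ[S]` splitting each coefficient into its components. It
reduces quaternions over the Lorentz numbers to pairs of real quaternions. -/
def quaternionProdEquiv : ℍ[R × S] ≃+* ℍ[R] × ℍ[S] where
  __ := (quaternionMap (RingHom.fst R S)).prod (quaternionMap (RingHom.snd R S))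
  invFun p := ⟨(p.1.re, p.2.re), (p.1.imI, p.2.imI), (p.1.imJ, p.2.imJ), (p.1.imK, p.2.imK)⟩
  left_inv _ := rfl
  right_inv _ := rfl

theorem quaternionProdEquiv_coe (a : R × S) :
    quaternionProdEquiv (a : ℍ[R × S]) = ((a.1 : ℍ[R]), (a.2 : ℍ[S])) :=
  rfl

theorem quaternionProdEquiv_coe_one_neg_one_mul (ξ : ℍ[R × S]) :
    quaternionProdEquiv ((((1, -1) : R × S) : ℍ[R × S]) * ξ) =
      ((quaternionProdEquiv ξ).1, -(quaternionProdEquiv ξ).2) := by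
  rw [map_mul, quaternionProdEquiv_coe, Quaternion.coe_neg, Quaternion.coe_one, Quaternion.coe_one]
  exact Prod.ext (one_mul _) (neg_one_mul _)

instance quaternion_isAddTorsionFree [IsAddTorsionFree R] : IsAddTorsionFree ℍ[R] :=
  Function.Injective.isAddTorsionFree
    (QuaternionAlgebra.addEquivTuple (-1 : R) 0 (-1)).toAddMonoidHom
    (QuaternionAlgebra.addEquivTuple (-1 : R) 0 (-1)).injective

theorem coe_one_neg_one_mul_eq_self_iff [IsAddTorsionFree S] {ξ : ℍ[R × S]} :
    (((1, -1) : R × S) : ℍ[R × S]) * ξ = ξ ↔ (quaternionProdEquiv ξ).2 = 0 := by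
  rw [← quaternionProdEquiv.injective.eq_iff, quaternionProdEquiv_coe_one_neg_one_mul,
    Prod.ext_iff, and_iff_right rfl, neg_eq_self]

theorem coe_one_neg_one_mul_eq_neg_iff [IsAddTorsionFree R] {ξ : ℍ[R × S]} :
    (((1, -1) : R × S) : ℍ[R × S]) * ξ = -ξ ↔ (quaternionProdEquiv ξ).1 = 0 := by
  rw [← quaternionProdEquiv.injective.eq_iff, quaternionProdEquiv_coe_one_neg_one_mul, map_neg,
    Prod.ext_iff, and_iff_left (Prod.snd_neg _).symm, Prod.fst_neg, self_eq_neg]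

end CommRing

section LinearOrderedField

variable {R S : Type*} [Field R] [LinearOrder R] [IsStrictOrderedRing R]
  [Field S] [LinearOrder S] [IsStrictOrderedRing S]

theorem isUnit_iff_quaternionProdEquiv_ne_zero {ξ : ℍ[R × S]} :
    IsUnit ξ ↔ (quaternionProdEquiv ξ).1 ≠ 0 ∧ (quaternionProdEquiv ξ).2 ≠ 0 := by
  rw [← isUnit_map_iff quaternionProdEquiv, Prod.isUnit_iff, isUnit_iff_ne_zero,
    isUnit_iff_ne_zero]

theorem isUnit_iff_not_mem_plus_union_minus_general (ξ : ℍ[R × S]) :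
    IsUnit ξ ↔ ξ ∉ ({η : ℍ[R × S] | (((1, -1) : R × S) : ℍ[R × S]) * η = η} ∪
      {η : ℍ[R × S] | (((1, -1) : R × S) : ℍ[R × S]) * η = -η}) := by
  rw [isUnit_iff_quaternionProdEquiv_ne_zero, Set.mem_union, Set.mem_ofPred_eq, Set.mem_ofPred_eq,
    coe_one_neg_one_mul_eq_self_iff, coe_one_neg_one_mul_eq_neg_iff, not_or, and_comm]

end LinearOrderedField

/-- An element `ξ ∈ ℍ^𝒜` is invertible iff it does not belong to
`ℍ^𝒜₊ ∪ ℍ^𝒜₋`, where `ℍ^𝒜₊ = {ξ : σξ = ξ}` and `ℍ^𝒜₋ = {ξ : σξ = −ξ}`. -/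
theorem isUnit_iff_not_mem_plus_union_minus (ξ : HA) :
    IsUnit ξ ↔ ξ ∉ ({η : HA | σQ * η = η} ∪ {η : HA | σQ * η = -η}) :=
  isUnit_iff_not_mem_plus_union_minus_general ξ
end
end

section
/- Let θ₁, θ₂ ∈ ℝ, θ = θ₁ + σθ₂ ∈ 𝒜, and q := cos θ · 1 + sin θ · I ∈ ℍ^𝒜. Then q ∈ S³_𝒜, and for every ξ = σx₀ + x₁I + x₂J + x₃K ∈ ℝ⁴ ⊂ ℍ^𝒜 one has q ξ hat(q)⁻¹ = σx₀' + x₁'I + x₂'J + x₃'K, where x₀' = cos(2θ₂)x₀ − sin(2θ₂)x₁, x₁' = sin(2θ₂)x₀ + cos(2θ₂)x₁, x₂' = cos(2θ₁)x₂ − sin(2θ₁)x₃, and x₃' = sin(2θ₁)x₂ + cos(2θ₁)x₃; i.e. Φ(q) is the rotation of angle 2θ₂ in the (x₀, x₁)-plane and of angle 2θ₁ in the (x₂, x₃)-plane. -/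
/-!
The algebra of Lorentz numbers `𝒜 = {x + σy}` with `σ² = 1` is identified with the
product ring `ℝ × ℝ` via `x + σy ↦ (x + y, x − y)`, under which `σ ↦ (1, −1)`.
`ℍ^𝒜` is the quaternion algebra over this commutative ring.
-/

noncomputable section

/-- The element `cos θ · 1 + sin θ · I ∈ ℍ^𝒜`, where `θ = θ₁ + σθ₂`. -/
def spinOf (θ₁ θ₂ : ℝ) : HA :=
  ((cosA (mkA θ₁ θ₂) : LorentzA) : HA) + ((sinA (mkA θ₁ θ₂) : LorentzA) : HA) * Iq

/-!
Writing `e^{θI} = cos θ + sin θ · I`, we have `q = e^{θI}` and `hat(q)⁻¹ = e^{-hat(θ)I}`. Split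
`ξ = u + v` with `u = σx₀ + x₁I` and `v = (x₂ + x₃I)J`. Since `u` commutes with `I` while `J`
anticommutes with it, `q ξ hat(q)⁻¹ = e^{(θ - hat(θ))I} u + e^{(θ + hat(θ))I} v`. For
`θ = θ₁ + σθ₂` the two angles are `2σθ₂` and `2θ₁`, and `cos (σt) = cos t`, `sin (σt) = σ sin t`.
-/

section Planes

variable {R : Type*} [CommRing R]

/-- The quaternion `a + bI` of the subalgebra `R[I]`, on which left and right multiplication by
`R[I]` agree. -/
@[simps]
def planeOneI (a b : R) : Quaternion R := ⟨a, b, 0, 0⟩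

/-- The quaternion `cJ + dK = (c + dI)J` of the complement `R[I]J` of `R[I]`, on which left and
right multiplication by `R[I]` differ by conjugation. -/
@[simps]
def planeJK (c d : R) : Quaternion R := ⟨0, 0, c, d⟩

theorem planeOneI_mul_planeOneI (a b c d : R) :
    planeOneI a b * planeOneI c d = planeOneI (a * c - b * d) (b * c + a * d) := by
  ext <;> simp [add_comm]

theorem planeOneI_mul_planeJK (a b c d : R) :
    planeOneI a b * planeJK c d = planeJK (a * c - b * d) (b * c + a * d) := by
  ext <;> simp [add_comm]

theorem planeOneI_mul_comm (a b c d : R) :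
    planeOneI a b * planeOneI c d = planeOneI c d * planeOneI a b := by
  simp only [planeOneI_mul_planeOneI]
  congr 1 <;> ring

theorem star_planeOneI (a b : R) : star (planeOneI a b) = planeOneI a (-b) := by
  ext <;> simp

theorem planeJK_mul_planeOneI (a b c d : R) :
    planeJK c d * planeOneI a b = planeOneI a (-b) * planeJK c d := by
  ext <;> simp <;> ring

end Planes

section Trigonometry

variable (θ φ : LorentzA) (t : ℝ)

theorem cosA_add : cosA (θ + φ) = cosA θ * cosA φ - sinA θ * sinA φ :=
  Prod.ext (Real.cos_add _ _) (Real.cos_add _ _)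

theorem sinA_add : sinA (θ + φ) = sinA θ * cosA φ + cosA θ * sinA φ :=
  Prod.ext (Real.sin_add _ _) (Real.sin_add _ _)

theorem cosA_neg : cosA (-θ) = cosA θ :=
  Prod.ext (Real.cos_neg _) (Real.cos_neg _)

theorem sinA_neg : sinA (-θ) = -sinA θ :=
  Prod.ext (Real.sin_neg _) (Real.sin_neg _)

theorem cosA_sq_add_sinA_sq : cosA θ ^ 2 + sinA θ ^ 2 = 1 :=
  Prod.ext (Real.cos_sq_add_sin_sq _) (Real.cos_sq_add_sin_sq _)

theorem cosA_toA : cosA (toA t) = toA (Real.cos t) := rfl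

theorem sinA_toA : sinA (toA t) = toA (Real.sin t) := rfl

theorem cosA_σA_mul_toA : cosA (σA * toA t) = toA (Real.cos t) := by
  ext <;> simp [cosA, σA, toA]

theorem sinA_σA_mul_toA : sinA (σA * toA t) = σA * toA (Real.sin t) := by
  ext <;> simp [sinA, σA, toA]

end Trigonometry

section Exponential

/-- The exponential `e^{θI} = cos θ + sin θ · I` for a Lorentz angle `θ`. It is given in closed
form, so that its algebra reduces to the addition formulas in `𝒜`. -/
def expI (θ : LorentzA) : HA := planeOneI (cosA θ) (sinA θ)

variable (θ φ : LorentzA)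

theorem expI_add : expI (θ + φ) = expI θ * expI φ := by
  rw [expI, expI, expI, planeOneI_mul_planeOneI, cosA_add, sinA_add]

theorem Hform_expI_self : Hform (expI θ) (expI θ) = 1 := by
  simpa [Hform, expI, planeOneI, sq] using cosA_sq_add_sinA_sq θ

theorem hatQ_star_expI : hatQ (star (expI θ)) = expI (-swapA θ) := by
  rw [expI, expI, star_planeOneI, cosA_neg, sinA_neg]
  rfl

theorem expI_mul_planeOneI_mul_expI (a b : LorentzA) :
    expI θ * planeOneI a b * expI φ = expI (θ + φ) * planeOneI a b := by
  have comm : planeOneI a b * expI φ = expI φ * planeOneI a b := planeOneI_mul_comm ..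
  rw [mul_assoc, comm, ← mul_assoc, expI_add]

theorem expI_mul_planeJK_mul_expI (c d : LorentzA) :
    expI θ * planeJK c d * expI φ = expI (θ - φ) * planeJK c d := by
  have anticomm : planeJK c d * expI φ = expI (-φ) * planeJK c d := by
    rw [expI, planeJK_mul_planeOneI, expI, cosA_neg, sinA_neg]
  rw [mul_assoc, anticomm, ← mul_assoc, sub_eq_add_neg, expI_add]

end Exponential

section Rotations

variable (t x y : ℝ)

theorem expI_σA_mul_toA_mul_planeOneI :
    expI (σA * toA t) * planeOneI (σA * toA x) (toA y) =
      planeOneI (σA * toA (Real.cos t * x - Real.sin t * y))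
        (toA (Real.sin t * x + Real.cos t * y)) := by
  rw [expI, cosA_σA_mul_toA, sinA_σA_mul_toA, planeOneI_mul_planeOneI]
  congr 1 <;> ext <;> simp [σA, toA]; ring

theorem expI_toA_mul_planeJK :
    expI (toA t) * planeJK (toA x) (toA y) =
      planeJK (toA (Real.cos t * x - Real.sin t * y)) (toA (Real.sin t * x + Real.cos t * y)) := by
  rw [expI, cosA_toA, sinA_toA, planeOneI_mul_planeJK]
  rfl

end Rotations

theorem embR4_eq_planeOneI_add_planeJK (x₀ x₁ x₂ x₃ : ℝ) :
    embR4 x₀ x₁ x₂ x₃ = planeOneI (σA * toA x₀) (toA x₁) + planeJK (toA x₂) (toA x₃) := by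
  ext <;> simp [embR4, σA, toA]

theorem spinOf_eq_expI (θ₁ θ₂ : ℝ) : spinOf θ₁ θ₂ = expI (mkA θ₁ θ₂) := by
  have hI : Iq = planeOneI 0 1 := rfl
  ext <;> simp [spinOf, expI, hI]

theorem mkA_sub_swapA (θ₁ θ₂ : ℝ) : mkA θ₁ θ₂ - swapA (mkA θ₁ θ₂) = σA * toA (2 * θ₂) := by
  ext <;> simp [mkA, swapA, σA, toA] <;> ring

theorem mkA_add_swapA (θ₁ θ₂ : ℝ) : mkA θ₁ θ₂ + swapA (mkA θ₁ θ₂) = toA (2 * θ₁) := by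
  ext <;> simp [mkA, swapA, toA] <;> ring

theorem expI_mul_embR4_mul_hatQ_star_expI (θ : LorentzA) (x₀ x₁ x₂ x₃ : ℝ) :
    expI θ * embR4 x₀ x₁ x₂ x₃ * hatQ (star (expI θ)) =
      expI (θ - swapA θ) * planeOneI (σA * toA x₀) (toA x₁) +
        expI (θ + swapA θ) * planeJK (toA x₂) (toA x₃) := by
  rw [embR4_eq_planeOneI_add_planeJK, hatQ_star_expI, mul_add, add_mul,
    expI_mul_planeOneI_mul_expI, expI_mul_planeJK_mul_expI, ← sub_eq_add_neg, sub_neg_eq_add]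

/-- For `θ = θ₁ + σθ₂` and `q = cos θ + sin θ · I`, one has `q ∈ S³_𝒜`,
and `Φ(q) : ξ ↦ q ξ hat(q)⁻¹` is the rotation of angle `2θ₂` in the `(x₀,x₁)`-plane
and of angle `2θ₁` in the `(x₂,x₃)`-plane of `ℝ⁴ ⊂ ℍ^𝒜`. -/
theorem spinOf_rotation (θ₁ θ₂ : ℝ) :
    Hform (spinOf θ₁ θ₂) (spinOf θ₁ θ₂) = 1 ∧
    ∀ x₀ x₁ x₂ x₃ : ℝ,
      spinOf θ₁ θ₂ * embR4 x₀ x₁ x₂ x₃ * hatQ (star (spinOf θ₁ θ₂))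
        = embR4 (Real.cos (2 * θ₂) * x₀ - Real.sin (2 * θ₂) * x₁)
            (Real.sin (2 * θ₂) * x₀ + Real.cos (2 * θ₂) * x₁)
            (Real.cos (2 * θ₁) * x₂ - Real.sin (2 * θ₁) * x₃)
            (Real.sin (2 * θ₁) * x₂ + Real.cos (2 * θ₁) * x₃) := by
  rw [spinOf_eq_expI]
  refine ⟨Hform_expI_self _, fun x₀ x₁ x₂ x₃ => ?_⟩
  rw [expI_mul_embR4_mul_hatQ_star_expI, mkA_sub_swapA, mkA_add_swapA,
    expI_σA_mul_toA_mul_planeOneI, expI_toA_mul_planeJK, embR4_eq_planeOneI_add_planeJK]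
end
end

section
/- Let ξ, ξ' ∈ Im ℍ^𝒜 with ξ × ξ' = 0 (equivalently ξξ' = ξ'ξ), and suppose ξ is invertible in ℍ^𝒜. Then there exists λ ∈ 𝒜 such that ξ' = λξ. -/
/-!
The algebra of Lorentz numbers `𝒜 = {x + σy}` with `σ² = 1` is identified with the
product ring `ℝ × ℝ` via `x + σy ↦ (x + y, x − y)`, under which `σ ↦ (1, −1)`.
`ℍ^𝒜` is the quaternion algebra over this commutative ring.
-/

noncomputable section

/-! Imaginary quaternions are skew-adjoint for conjugation. The inverse of an invertible
skew-adjoint element is skew-adjoint, and the product of two commuting skew-adjoint quaternions is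
fixed by conjugation, hence scalar. So `λ := ξ'ξ⁻¹` is scalar, and `ξ' = λξ`. -/

section StarRing

variable {A : Type*} [Ring A] [StarRing A]

theorem isSelfAdjoint_mul_of_mem_skewAdjoint {a b : A} (ha : a ∈ skewAdjoint A)
    (hb : b ∈ skewAdjoint A) (hab : Commute a b) : IsSelfAdjoint (a * b) := by
  rw [skewAdjoint.mem_iff] at ha hb
  rw [isSelfAdjoint_iff, star_mul, ha, hb, neg_mul_neg, hab.eq]

theorem units_inv_mem_skewAdjoint {u : Aˣ} (hu : (u : A) ∈ skewAdjoint A) :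
    (↑u⁻¹ : A) ∈ skewAdjoint A := by
  rw [skewAdjoint.mem_iff] at hu ⊢
  have hstar : star u = -u := Units.ext hu
  rw [← Units.coe_star, star_inv, hstar, inv_neg, Units.val_neg]

end StarRing

section QuaternionAlgebra

open scoped Quaternion

variable {R : Type*} [CommRing R] {c₁ c₂ c₃ : R}

theorem eq_coe_re_of_isSelfAdjoint (two_regular : IsLeftRegular (2 : R)) {a : ℍ[R,c₁,c₂,c₃]}
    (ha : IsSelfAdjoint a) : a = a.re := by
  have eq_zero_of_neg_eq {x : R} (hx : -x = x) : x = 0 :=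
    two_regular (by linear_combination -hx)
  ext
  · rfl
  · exact eq_zero_of_neg_eq (congrArg QuaternionAlgebra.imI ha.star_eq)
  · exact eq_zero_of_neg_eq (congrArg QuaternionAlgebra.imJ ha.star_eq)
  · exact eq_zero_of_neg_eq (congrArg QuaternionAlgebra.imK ha.star_eq)

theorem mem_skewAdjoint_of_re_eq_zero {a : ℍ[R,c₁,0,c₃]} (ha : a.re = 0) :
    a ∈ skewAdjoint ℍ[R,c₁,0,c₃] := by
  rw [skewAdjoint.mem_iff, QuaternionAlgebra.star_eq_two_re_sub, ha]
  simp only [mul_zero, zero_mul, add_zero, QuaternionAlgebra.coe_zero, zero_sub]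

theorem cross_eq_zero_dependent_general (two_regular : IsLeftRegular (2 : R))
    {ξ ξ' : ℍ[R,c₁,c₂,c₃]} (hξ : ξ ∈ skewAdjoint ℍ[R,c₁,c₂,c₃])
    (hξ' : ξ' ∈ skewAdjoint ℍ[R,c₁,c₂,c₃]) (hcomm : Commute ξ ξ') (hinv : IsUnit ξ) :
    ∃ r : R, ξ' = (r : ℍ[R,c₁,c₂,c₃]) * ξ := by
  obtain ⟨u, rfl⟩ := hinv
  have hself : IsSelfAdjoint (ξ' * ↑u⁻¹) :=
    isSelfAdjoint_mul_of_mem_skewAdjoint hξ' (units_inv_mem_skewAdjoint hξ)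
      hcomm.symm.units_inv_right
  refine ⟨(ξ' * ↑u⁻¹).re, ?_⟩
  rw [← eq_coe_re_of_isSelfAdjoint two_regular hself, Units.inv_mul_cancel_right]

end QuaternionAlgebra

theorem crossP_eq_zero_iff_commute {ξ ξ' : HA} : crossP ξ ξ' = 0 ↔ Commute ξ ξ' :=
  calc
    crossP ξ ξ' = 0 ↔ ξ * ξ' - ξ' * ξ = 0 := smul_eq_zero_iff_right (M := HA) one_half_pos.ne'
    _ ↔ Commute ξ ξ' := sub_eq_zero

theorem isLeftRegular_two_lorentzA : IsLeftRegular (2 : LorentzA) :=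
  (IsRegular.of_ne_zero two_ne_zero).left.prodMk (IsRegular.of_ne_zero two_ne_zero).left

/-- If `ξ, ξ' ∈ Im ℍ^𝒜` satisfy `ξ × ξ' = 0` and `ξ` is invertible,
then `ξ' = λξ` for some `λ ∈ 𝒜`. -/
theorem cross_eq_zero_dependent (ξ ξ' : HA) (hξ : ξ.re = 0) (hξ' : ξ'.re = 0)
    (hcross : crossP ξ ξ' = 0) (hinv : IsUnit ξ) :
    ∃ lam : LorentzA, ξ' = (lam : HA) * ξ :=
  cross_eq_zero_dependent_general isLeftRegular_two_lorentzA (mem_skewAdjoint_of_re_eq_zero hξ)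
    (mem_skewAdjoint_of_re_eq_zero hξ') (crossP_eq_zero_iff_commute.mp hcross) hinv
end
end

section
/- Let ψ : 𝒜 → 𝒜 be differentiable (identifying 𝒜 with ℝ² as a real vector space) and conformal, i.e. dψ_a(σh) = σ·dψ_a(h) for every point a and every tangent vector h, where σ· denotes multiplication by σ in 𝒜. Then, in the coordinates (s, t) defined by x + σy = ((1+σ)/2)s + ((1−σ)/2)t (i.e. under the identification 𝒜 ≅ ℝ × ℝ), each component of ψ depends on one variable only: there exist functions ψ₁, ψ₂ : ℝ → ℝ such that ψ(s, t) = (ψ₁(s), ψ₂(t)). -/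
/-!
The algebra of Lorentz numbers `𝒜 = {x + σy}` with `σ² = 1` is identified with the
product ring `ℝ × ℝ` via `x + σy ↦ (x + y, x − y)`, under which `σ ↦ (1, −1)`.
`ℍ^𝒜` is the quaternion algebra over this commutative ring.
-/

noncomputable section

/-! At each point the differential commutes with `diag(α, β)` (`σ` being `diag(1, -1)`), so it
maps the eigenspaces `E₁ × 0` and `0 × E₂` into `F₁ × 0` and `0 × F₂` respectively. Thus the first
component of `ψ` has vanishing derivative along `0 × E₂` and the second one along `E₁ × 0`. -/

section BlockDiagonal

variable {R M₁ M₂ N₁ N₂ : Type*} [Ring R] [IsCancelMulZero R]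
  [AddCommMonoid M₁] [AddCommMonoid M₂] [AddCommGroup N₁] [AddCommGroup N₂]
  [Module R M₁] [Module R M₂] [Module R N₁] [Module R N₂] {α β : R}

theorem fst_map_zero_mk_of_commute_diag [Module.IsTorsionFree R N₁] (hαβ : α ≠ β)
    {L : M₁ × M₂ →ₗ[R] N₁ × N₂}
    (hL : ∀ h, L (α • h.1, β • h.2) = (α • (L h).1, β • (L h).2)) (v : M₂) :
    (L (0, v)).1 = 0 := by
  have eigenvector : L (α • 0, β • v) = β • L (0, v) := by
    rw [← map_smul, Prod.smul_mk, smul_zero, smul_zero]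
  have smul_eq : α • (L (0, v)).1 = β • (L (0, v)).1 :=
    congrArg Prod.fst ((hL (0, v)).symm.trans eigenvector)
  by_contra hne
  exact hαβ (smul_left_injective R hne smul_eq)

theorem snd_map_mk_zero_of_commute_diag [Module.IsTorsionFree R N₂] (hαβ : α ≠ β)
    {L : M₁ × M₂ →ₗ[R] N₁ × N₂}
    (hL : ∀ h, L (α • h.1, β • h.2) = (α • (L h).1, β • (L h).2)) (u : M₁) :
    (L (u, 0)).2 = 0 := by
  have eigenvector : L (α • u, β • 0) = α • L (u, 0) := by
    rw [← map_smul, Prod.smul_mk, smul_zero, smul_zero]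
  have smul_eq : α • (L (u, 0)).2 = β • (L (u, 0)).2 :=
    congrArg Prod.snd (eigenvector.symm.trans (hL (u, 0)))
  by_contra hne
  exact hαβ (smul_left_injective R hne smul_eq)

end BlockDiagonal

section Calculus

variable {𝕜 : Type*} [RCLike 𝕜]

theorem apply_add_eq_of_fderiv_apply_eq_zero {E F : Type*}
    [NormedAddCommGroup E] [NormedSpace 𝕜 E] [NormedAddCommGroup F] [NormedSpace 𝕜 F]
    {f : E → F} (hf : Differentiable 𝕜 f) {v : E} (hv : ∀ x, fderiv 𝕜 f x v = 0) (x : E) :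
    f (x + v) = f x := by
  have hasDerivAt_line (t : 𝕜) : HasDerivAt (fun t : 𝕜 => f (x + t • v)) 0 t := by
    have line : HasDerivAt (fun t : 𝕜 => x + t • v) v t := by
      simpa only [one_smul] using ((hasDerivAt_id' t).smul_const v).const_add x
    simpa only [hv, Function.comp_def] using (hf (x + t • v)).hasFDerivAt.comp_hasDerivAt t line
  simpa only [one_smul, zero_smul, add_zero] using
    is_const_of_deriv_eq_zero (fun t => (hasDerivAt_line t).differentiableAt)
      (fun t => (hasDerivAt_line t).deriv) 1 0

theorem conformal_map_splits_general {E₁ E₂ F₁ F₂ : Type*}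
    [NormedAddCommGroup E₁] [NormedSpace 𝕜 E₁] [NormedAddCommGroup E₂] [NormedSpace 𝕜 E₂]
    [NormedAddCommGroup F₁] [NormedSpace 𝕜 F₁] [NormedAddCommGroup F₂] [NormedSpace 𝕜 F₂]
    {α β : 𝕜} (hαβ : α ≠ β) {ψ : E₁ × E₂ → F₁ × F₂} (hdiff : Differentiable 𝕜 ψ)
    (hconf : ∀ a h : E₁ × E₂, fderiv 𝕜 ψ a (α • h.1, β • h.2) =
      (α • (fderiv 𝕜 ψ a h).1, β • (fderiv 𝕜 ψ a h).2)) :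
    ∃ (ψ₁ : E₁ → F₁) (ψ₂ : E₂ → F₂), ∀ s t, ψ (s, t) = (ψ₁ s, ψ₂ t) := by
  have fderiv_fst (t : E₂) (a : E₁ × E₂) : fderiv 𝕜 (fun p => (ψ p).1) a (0, t) = 0 := by
    rw [fderiv.fst (hdiff a)]
    exact fst_map_zero_mk_of_commute_diag hαβ (L := (fderiv 𝕜 ψ a).toLinearMap) (hconf a) t
  have fderiv_snd (s : E₁) (a : E₁ × E₂) : fderiv 𝕜 (fun p => (ψ p).2) a (s, 0) = 0 := by
    rw [fderiv.snd (hdiff a)]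
    exact snd_map_mk_zero_of_commute_diag hαβ (L := (fderiv 𝕜 ψ a).toLinearMap) (hconf a) s
  refine ⟨fun s => (ψ (s, 0)).1, fun t => (ψ (0, t)).2, fun s t => Prod.ext ?_ ?_⟩
  · simpa only [Prod.mk_add_mk, add_zero, zero_add] using
      apply_add_eq_of_fderiv_apply_eq_zero hdiff.fst (fderiv_fst t) (s, 0)
  · simpa only [Prod.mk_add_mk, add_zero, zero_add] using
      apply_add_eq_of_fderiv_apply_eq_zero hdiff.snd (fderiv_snd s) (0, t)

end Calculus

theorem σA_mul (h : LorentzA) : σA * h = ((1 : ℝ) • h.1, (-1 : ℝ) • h.2) := rfl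

/-- A differentiable conformal map `ψ : 𝒜 → 𝒜` (i.e. `dψ` commutes
with multiplication by `σ`) splits, in the coordinates `(s, t)` given by
`𝒜 ≅ ℝ × ℝ`, into two functions of one variable: `ψ(s, t) = (ψ₁(s), ψ₂(t))`. -/
theorem conformal_map_splits (ψ : LorentzA → LorentzA) (hdiff : Differentiable ℝ ψ)
    (hconf : ∀ a h : LorentzA, fderiv ℝ ψ a (σA * h) = σA * fderiv ℝ ψ a h) :
    ∃ ψ₁ ψ₂ : ℝ → ℝ, ∀ s t : ℝ, ψ (s, t) = (ψ₁ s, ψ₂ t) := by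
  refine conformal_map_splits_general (α := (1 : ℝ)) (β := -1) (by norm_num) hdiff fun a h => ?_
  simpa only [σA_mul] using hconf a h
end
end

section
/- Let ψ₁, ψ₂ : ℝ → ℝ, k ∈ ℤ, and m₁, M₁, m₂, M₂ ∈ ℝ be such that m₁ ≤ ψ₁(s) ≤ M₁ and m₂ ≤ ψ₂(t) ≤ M₂ for all s, t ∈ ℝ, and suppose (2k+1)π < m₁ − M₂ and M₁ − m₂ < 2(k+1)π. Then there exists α ∈ ℝ such that sin(ψ₁(s) − α) > 0 and sin(ψ₂(t) − α) > 0 for all s, t ∈ ℝ. -/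
open Real

/-!
Translating the second range by `2(k+1)π` does not affect `sin`, and the two bounds then say
`m₁ ≤ M₁ < m₂ + 2(k+1)π ≤ M₂ + 2(k+1)π < m₁ + π`. So both ranges lie, modulo `2π`, in the single
interval `[m₁, M₂ + 2(k+1)π]` of length less than `π`, which fits in an open half-period
`(α, α + π)` where `sin (· - α)` is positive.
-/

lemma sin_pos_of_add_int_mul_two_pi_mem_Ioo {x : ℝ} (n : ℤ)
    (hx : x + n * (2 * π) ∈ Set.Ioo 0 π) : 0 < sin x :=
  sin_add_int_mul_two_pi x n ▸ sin_pos_of_mem_Ioo hx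

lemma exists_forall_sin_sub_pos_of_sub_lt_pi {a b : ℝ} (hab : b - a < π) :
    ∃ α : ℝ, ∀ (x : ℝ) (n : ℤ), x + n * (2 * π) ∈ Set.Icc a b → 0 < sin (x - α) := by
  obtain ⟨α, hbα, hαa⟩ : ∃ α, b - π < α ∧ α < a := exists_between (by linarith)
  refine ⟨α, fun x n hx ↦ sin_pos_of_add_int_mul_two_pi_mem_Ioo n ⟨?_, ?_⟩⟩
  · linarith [hx.1]
  · linarith [hx.2]

theorem exists_alpha_sin_pos_general {ι κ : Sort*} {ψ₁ : ι → ℝ} {ψ₂ : κ → ℝ} (n : ℤ)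
    {m₁ M₁ m₂ M₂ : ℝ} (h₁ : ∀ s, m₁ ≤ ψ₁ s ∧ ψ₁ s ≤ M₁) (h₂ : ∀ t, m₂ ≤ ψ₂ t ∧ ψ₂ t ≤ M₂)
    (hm : m₁ ≤ m₂ + n * (2 * π)) (hM : M₁ ≤ M₂ + n * (2 * π))
    (hlt : M₂ + n * (2 * π) - m₁ < π) :
    ∃ α : ℝ, (∀ s, 0 < sin (ψ₁ s - α)) ∧ (∀ t, 0 < sin (ψ₂ t - α)) := by
  obtain ⟨α, hα⟩ := exists_forall_sin_sub_pos_of_sub_lt_pi hlt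
  refine ⟨α, fun s ↦ hα _ 0 ?_, fun t ↦ hα _ n ?_⟩
  · simpa only [Int.cast_zero, zero_mul, add_zero] using ⟨(h₁ s).1, (h₁ s).2.trans hM⟩
  · exact ⟨hm.trans (by gcongr; exact (h₂ t).1), by gcongr; exact (h₂ t).2⟩

/-- If `ψ₁, ψ₂ : ℝ → ℝ` satisfy `m₁ ≤ ψ₁ ≤ M₁`, `m₂ ≤ ψ₂ ≤ M₂` with
`(2k+1)π < m₁ − M₂` and `M₁ − m₂ < 2(k+1)π`, then there is `α ∈ ℝ` with
`sin(ψ₁(s) − α) > 0` and `sin(ψ₂(t) − α) > 0` for all `s, t`. -/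
theorem exists_alpha_sin_pos (ψ₁ ψ₂ : ℝ → ℝ) (k : ℤ) (m₁ M₁ m₂ M₂ : ℝ)
    (h₁ : ∀ s : ℝ, m₁ ≤ ψ₁ s ∧ ψ₁ s ≤ M₁)
    (h₂ : ∀ t : ℝ, m₂ ≤ ψ₂ t ∧ ψ₂ t ≤ M₂)
    (hlow : (2 * (k : ℝ) + 1) * π < m₁ - M₂)
    (hhigh : M₁ - m₂ < 2 * ((k : ℝ) + 1) * π) :
    ∃ α : ℝ, (∀ s : ℝ, 0 < Real.sin (ψ₁ s - α)) ∧ (∀ t : ℝ, 0 < Real.sin (ψ₂ t - α)) := by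
  have hmM₁ : m₁ ≤ M₁ := (h₁ 0).1.trans (h₁ 0).2
  have hmM₂ : m₂ ≤ M₂ := (h₂ 0).1.trans (h₂ 0).2
  apply exists_alpha_sin_pos_general (k + 1) h₁ h₂ <;> push_cast <;> linarith
end

section
/- Let g : ℝ → ℍ be differentiable, ψ : ℝ → ℝ, and α ∈ ℝ, and suppose g'(s) = (cos ψ(s) · J + sin ψ(s) · K) · g(s) for all s ∈ ℝ. Set J_α := cos α · J + sin α · K and γ(s) := ḡ(s) · J_α · g(s). Then γ is differentiable with γ'(s) = 2 sin(ψ(s) − α) · ḡ(s) · I · g(s) for all s ∈ ℝ. -/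
/-! If `g' = X g` with `X` skew-adjoint, then `(g* P g)' = g* (X* P + P X) g = g* [P, X] g`. For
`P` and `X` the unit vectors at angles `α` and `ψ` in the plane of `J` and `K`, the bracket `[P, X]`
is the determinant `cos α sin ψ - sin α cos ψ = sin (ψ - α)` times `[J, K] = 2 I`. -/

noncomputable section

/-- The imaginary unit `I` of the real quaternions. -/
def I₁ : Quaternion ℝ := ⟨0, 1, 0, 0⟩
/-- The imaginary unit `J` of the real quaternions. -/
def J₁ : Quaternion ℝ := ⟨0, 0, 1, 0⟩
/-- The imaginary unit `K` of the real quaternions. -/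
def K₁ : Quaternion ℝ := ⟨0, 0, 0, 1⟩

section Lie

variable {L : Type*} [LieRing L]

theorem lie_smul_add_smul {R : Type*} [CommRing R] [LieAlgebra R L] (a b c d : R) (x y : L) :
    ⁅a • x + b • y, c • x + d • y⁆ = (a * d - b * c) • ⁅x, y⁆ := by
  simp only [add_lie, lie_add, smul_lie, lie_smul, lie_self, ← lie_skew x y]
  module

theorem lie_cos_smul_add_sin_smul [LieAlgebra ℝ L] (α ψ : ℝ) (x y : L) :
    ⁅Real.cos α • x + Real.sin α • y, Real.cos ψ • x + Real.sin ψ • y⁆ =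
      Real.sin (ψ - α) • ⁅x, y⁆ := by
  rw [lie_smul_add_smul, Real.sin_sub]
  congr 1
  ring

end Lie

theorem star_mul_add_mul_eq_lie {A : Type*} [Ring A] [StarRing A] {x : A}
    (hx : x ∈ skewAdjoint A) (p : A) : star x * p + p * x = ⁅p, x⁆ := by
  rw [skewAdjoint.mem_iff.mp hx, Ring.lie_def]
  noncomm_ring

section Derivative

attribute [local instance] LieRing.ofAssociativeRing

variable {A : Type*} [NormedRing A] [StarRing A] [ContinuousStar A]

theorem hasDerivAt_star_mul_mul_of_mem_skewAdjoint {𝕜 : Type*} [NontriviallyNormedField 𝕜]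
    [StarRing 𝕜] [TrivialStar 𝕜] [NormedAlgebra 𝕜 A] [StarModule 𝕜 A] {g : 𝕜 → A} {s : 𝕜} {x : A}
    (hx : x ∈ skewAdjoint A) (hg : HasDerivAt g (x * g s) s) (p : A) :
    HasDerivAt (fun t => star (g t) * p * g t) (star (g s) * ⁅p, x⁆ * g s) s := by
  refine ((hg.star.mul_const p).mul hg).congr_deriv ?_
  rw [← star_mul_add_mul_eq_lie hx, star_mul]
  noncomm_ring

theorem hopf_projection_derivative_general [NormedAlgebra ℝ A] [StarModule ℝ A] {g : ℝ → A}
    {s ψ : ℝ} {x y : A} (hx : x ∈ skewAdjoint A) (hy : y ∈ skewAdjoint A)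
    (hg : HasDerivAt g ((Real.cos ψ • x + Real.sin ψ • y) * g s) s) (α : ℝ) :
    HasDerivAt (fun t => star (g t) * (Real.cos α • x + Real.sin α • y) * g t)
      (Real.sin (ψ - α) • (star (g s) * ⁅x, y⁆ * g s)) s := by
  have hxy : Real.cos ψ • x + Real.sin ψ • y ∈ skewAdjoint A :=
    add_mem (skewAdjoint.smul_mem _ hx) (skewAdjoint.smul_mem _ hy)
  rw [← smul_mul_assoc, ← mul_smul_comm, ← lie_cos_smul_add_sin_smul α ψ x y]
  exact hasDerivAt_star_mul_mul_of_mem_skewAdjoint hxy hg _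

end Derivative

section Quaternion

variable {R : Type*} [CommRing R]

instance instStarModuleQuaternion {S : Type*} [Monoid S] [Star S] [TrivialStar S]
    [DistribMulAction S R] : StarModule S (Quaternion R) where
  star_smul r q := by rw [Quaternion.star_smul, star_trivial r]

theorem quaternion_mem_skewAdjoint_iff [NoZeroDivisors R] [CharZero R] {q : Quaternion R} :
    q ∈ skewAdjoint (Quaternion R) ↔ q.re = 0 :=
  skewAdjoint.mem_iff.trans Quaternion.star_eq_neg

end Quaternion

theorem J₁_mem_skewAdjoint : J₁ ∈ skewAdjoint (Quaternion ℝ) :=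
  quaternion_mem_skewAdjoint_iff.mpr rfl

theorem K₁_mem_skewAdjoint : K₁ ∈ skewAdjoint (Quaternion ℝ) :=
  quaternion_mem_skewAdjoint_iff.mpr rfl

theorem J₁_mul_K₁ : J₁ * K₁ = I₁ :=
  (QuaternionAlgebra.mk_mul_mk ..).trans (by norm_num [I₁])

theorem K₁_mul_J₁ : K₁ * J₁ = -I₁ :=
  calc
    K₁ * J₁ = star (J₁ * K₁) := by
      rw [star_mul, skewAdjoint.mem_iff.mp J₁_mem_skewAdjoint,
        skewAdjoint.mem_iff.mp K₁_mem_skewAdjoint, neg_mul_neg]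
    _ = star I₁ := by rw [J₁_mul_K₁]
    _ = -I₁ := Quaternion.star_eq_neg.mpr rfl

theorem lie_J₁_K₁ : ⁅J₁, K₁⁆ = (2 : ℝ) • I₁ := by
  rw [Ring.lie_def, J₁_mul_K₁, K₁_mul_J₁, sub_neg_eq_add, two_smul]

/-- If `g : ℝ → ℍ` is differentiable with
`g'(s) = (cos ψ(s)·J + sin ψ(s)·K)·g(s)`, then with `J_α = cos α·J + sin α·K` the curve
`γ(s) = ḡ(s)·J_α·g(s)` is differentiable with `γ'(s) = 2 sin(ψ(s) − α)·ḡ(s)·I·g(s)`. -/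
theorem hopf_projection_derivative (g : ℝ → Quaternion ℝ) (hg : Differentiable ℝ g)
    (ψ : ℝ → ℝ) (α : ℝ)
    (hg' : ∀ s : ℝ, deriv g s = (Real.cos (ψ s) • J₁ + Real.sin (ψ s) • K₁) * g s) :
    Differentiable ℝ (fun s => star (g s) * (Real.cos α • J₁ + Real.sin α • K₁) * g s) ∧
    ∀ s : ℝ, deriv (fun s => star (g s) * (Real.cos α • J₁ + Real.sin α • K₁) * g s) s
      = (2 * Real.sin (ψ s - α)) • (star (g s) * I₁ * g s) := by
  have hγ (s : ℝ) := hopf_projection_derivative_general J₁_mem_skewAdjoint K₁_mem_skewAdjoint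
    (hg' s ▸ (hg s).hasDerivAt) α
  refine ⟨fun s => (hγ s).differentiableAt, fun s => (hγ s).deriv.trans ?_⟩
  rw [lie_J₁_K₁, mul_smul_comm, smul_mul_assoc, smul_smul, mul_comm (2 : ℝ)]
end
end
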